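/- Let d ∈ ℕ and, for each i ∈ {1,…,d}, let (φ^{(i)}_j)_{j ∈ ℕ₀} be a family of nonnegative functions on ℝ with Σ_{j ∈ ℕ₀} φ^{(i)}_j(k) = 1 for every k ∈ ℕ₀, and set φ_{j̄}(k̄) := φ^{(1)}_{j₁}(k₁)⋯φ^{(d)}_{j_d}(k_d) for j̄, k̄ ∈ ℕ₀^d. Then for every f ∈ L¹([0,1]^d) and every Schwartz function η ∈ 𝒮(ℝ^d) the double series Σ_{j̄ ∈ ℕ₀^d} Σ_{k̄ ∈ ℕ₀^d} φ_{j̄}(k̄) (∫_{[0,1]^d} f c_{k̄})(∫_{[0,1]^d} c_{k̄} η) converges absolutely and equals ∫_{[0,1]^d} f(x) η(x) dx; that is, f = Σ_{j̄ ∈ ℕ₀^d} f^{hpc}_{j̄} weak*-ly in 𝒮′(ℝ^d), where f^{hpc}_{j̄} := Σ_{k̄ ∈ ℕ₀^d} φ_{j̄}(k̄) (∫_{[0,1]^d} f c_{k̄}) c_{k̄} are the half-period cosine building blocks of f. -/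

import Mathlib

open MeasureTheory Set

/-- Univariate half-period cosine functions: `c₀ ≡ 1`, `c_k(x) = √2 cos(πkx)` for `k ≥ 1`. -/
noncomputable def hpcFun (k : ℕ) (x : ℝ) : ℝ :=
  if k = 0 then 1 else Real.sqrt 2 * Real.cos (Real.pi * (k : ℝ) * x)

/-- Tensorized half-period cosine functions `c_k̄`. -/
noncomputable def hpc (d : ℕ) (k : Fin d → ℕ) (x : Fin d → ℝ) : ℝ :=
  ∏ i, hpcFun (k i) (x i)


theorem hasSum_mul_aux {α β : Type} (f : α → ℂ) (g : β → ℂ) (s t : ℂ)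
    (hf : Summable fun k => ‖f k‖) (hg : Summable fun k => ‖g k‖)
    (hs : HasSum f s) (ht : HasSum g t) :
    Summable (fun x : α × β => ‖f x.1 * g x.2‖) ∧
    HasSum (fun x : α × β => f x.1 * g x.2) (s * t) := by
  have key : Summable (fun x : α × β => ‖f x.1 * g x.2‖) := Summable.mul_norm hf hg
  exact ⟨key, hs.mul ht key.of_norm⟩

theorem hasSum_prod_pi_aux (d : ℕ) (g : Fin d → ℕ → ℂ) (s : Fin d → ℂ)
    (hn : ∀ i, Summable fun k => ‖g i k‖) (hs : ∀ i, HasSum (g i) (s i)) :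
    Summable (fun k : Fin d → ℕ => ‖∏ i, g i (k i)‖) ∧
    HasSum (fun k : Fin d → ℕ => ∏ i, g i (k i)) (∏ i, s i) := by
  induction d with
  | zero =>
    constructor
    · exact (hasSum_fintype _).summable
    · simp
  | succ d ih =>
    obtain ⟨h1, h2⟩ := ih (fun i => g i.succ) (fun i => s i.succ) (fun i => hn i.succ)
      (fun i => hs i.succ)
    obtain ⟨key, key2⟩ := hasSum_mul_aux (g 0) (fun k : Fin d → ℕ => ∏ i : Fin d, g i.succ (k i)) _ _
      (hn 0) h1 (hs 0) h2
    let e : ℕ × (Fin d → ℕ) ≃ (Fin (d+1) → ℕ) := Fin.consEquiv (fun _ => ℕ)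
    constructor
    · rw [← e.summable_iff]
      refine key.congr fun x => ?_
      simp [e, Fin.prod_univ_succ, Fin.consEquiv]
    · rw [← e.hasSum_iff, Fin.prod_univ_succ]
      convert key2 using 2 with x
      simp [e, Fin.prod_univ_succ, Fin.consEquiv]

/-- One-dimensional cosine coefficients of the exponential. -/
noncomputable def hpcCoef (k : ℕ) (w : ℝ) : ℂ :=
  ∫ x in (0:ℝ)..1, (hpcFun k x : ℂ) * Complex.exp (w * x * Complex.I)

/-- The unnormalised coefficients. -/
noncomputable def cosCoef (k : ℕ) (w : ℝ) : ℂ :=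
  ∫ x in (0:ℝ)..1, (Real.cos (Real.pi * (k : ℝ) * x) : ℂ) * Complex.exp (w * x * Complex.I)

theorem hpcFun_continuous (k : ℕ) : Continuous (hpcFun k) := by
  unfold hpcFun
  split_ifs <;> fun_prop

theorem hpcFun_abs_le (k : ℕ) (x : ℝ) : |hpcFun k x| ≤ 2 := by
  unfold hpcFun
  split_ifs
  · norm_num
  · rw [abs_mul, abs_of_nonneg (Real.sqrt_nonneg 2)]
    have h1 : Real.sqrt 2 ≤ 2 := by
      rw [Real.sqrt_le_left (by norm_num)]; norm_num
    have := Real.abs_cos_le_one (Real.pi * (k : ℝ) * x)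
    nlinarith [abs_nonneg (Real.cos (Real.pi * (k : ℝ) * x))]

theorem norm_exp_aux (w x : ℝ) : ‖Complex.exp (w * x * Complex.I)‖ = 1 := by
  have := Complex.norm_exp_ofReal_mul_I (w * x)
  push_cast at this
  exact this

theorem cosCoef_norm_le_one (k : ℕ) (w : ℝ) : ‖cosCoef k w‖ ≤ 1 := by
  unfold cosCoef
  have := intervalIntegral.norm_integral_le_of_norm_le_const (a := (0:ℝ)) (b := 1) (C := 1)
    (f := fun x : ℝ => (Real.cos (Real.pi * (k : ℝ) * x) : ℂ) * Complex.exp (w * x * Complex.I)) ?_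
  · simpa using this
  · intro x _
    rw [norm_mul, norm_exp_aux, mul_one, Complex.norm_real]
    exact Real.abs_cos_le_one _

theorem cosCoef_ibp (k : ℕ) (w : ℝ) :
    cosCoef k w * (Real.pi * k)^2 =
      w * Complex.I * ((Real.cos (Real.pi * k) : ℂ) * Complex.exp (w * Complex.I) - 1)
        + w^2 * cosCoef k w := by
  have hd : ∀ x ∈ Set.uIcc (0:ℝ) 1, HasDerivAt
      (fun x : ℝ => (((Real.pi * k * Real.sin (Real.pi * k * x) : ℝ) : ℂ) +
        (Real.cos (Real.pi * k * x) : ℂ) * (w * Complex.I)) * Complex.exp (w * x * Complex.I))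
      (((Real.pi * k)^2 - w^2) * ((Real.cos (Real.pi * (k : ℝ) * x) : ℂ) *
        Complex.exp (w * x * Complex.I))) x := by
    intro x _
    have hl : HasDerivAt (fun x : ℝ => Real.pi * k * x) (Real.pi * k) x := by
      simpa using (hasDerivAt_id x).const_mul (Real.pi * k)
    have h1 := ((hl.sin.const_mul (Real.pi * k)).ofReal_comp).add
      (hl.cos.ofReal_comp.mul_const ((w:ℂ) * Complex.I))
    have h2 : HasDerivAt (fun x : ℝ => (w:ℂ) * x * Complex.I) (w * Complex.I) x := by
      have := ((hasDerivAt_id x).ofReal_comp.const_mul (w:ℂ)).mul_const Complex.I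
      simpa using this
    refine (h1.mul h2.cexp).congr_deriv ?_
    simp only [Pi.add_apply]
    push_cast
    linear_combination (Complex.cos (Real.pi * k * x) * w^2 * Complex.exp (w * x * Complex.I)) * Complex.I_sq
  have hI := intervalIntegral.integral_eq_sub_of_hasDerivAt hd
    (Continuous.intervalIntegrable (by fun_prop) _ _)
  rw [intervalIntegral.integral_const_mul] at hI
  change _ * cosCoef k w = _ at hI
  have hs : Real.sin (Real.pi * k) = 0 := by rw [mul_comm]; exact Real.sin_nat_mul_pi k
  simp only [mul_one, hs, mul_zero, Real.sin_zero, Real.cos_zero, Complex.ofReal_zero,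
    Complex.ofReal_one, zero_mul, Complex.exp_zero, zero_add, one_mul] at hI
  linear_combination hI

theorem cosCoef_norm_le (k : ℕ) (w : ℝ) :
    ‖cosCoef k w‖ ≤ 4 * (1 + |w|)^2 * (1 / ((k:ℝ) + 1)^2) := by
  have h0 := cosCoef_norm_le_one k w
  have hw := abs_nonneg w
  by_cases hk : k = 0
  · subst hk
    norm_num
    nlinarith
  · have hk1 : (1:ℝ) ≤ k := by exact_mod_cast Nat.one_le_iff_ne_zero.mpr hk
    have h := congrArg norm (cosCoef_ibp k w)
    have h2 : ‖cosCoef k w‖ * (Real.pi * k)^2 ≤ 2 * |w| + |w|^2 := by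
      have e1 : ‖cosCoef k w * ((Real.pi:ℂ) * k)^2‖ = ‖cosCoef k w‖ * (Real.pi * k)^2 := by
        rw [norm_mul, norm_pow, norm_mul, Complex.norm_real, Complex.norm_natCast,
          Real.norm_of_nonneg Real.pi_pos.le]
      rw [← e1, h]
      refine (norm_add_le _ _).trans ?_
      have e2 : ‖(w:ℂ)^2 * cosCoef k w‖ ≤ |w|^2 := by
        rw [norm_mul, norm_pow, Complex.norm_real, Real.norm_eq_abs]
        nlinarith [sq_nonneg |w|]
      have e3 : ‖((Real.cos (Real.pi * k) : ℂ) * Complex.exp (w * Complex.I) - 1)‖ ≤ 2 := by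
        refine (norm_sub_le _ _).trans ?_
        rw [norm_mul, Complex.norm_exp_ofReal_mul_I, Complex.norm_real, Real.norm_eq_abs]
        have := Real.abs_cos_le_one (Real.pi * k)
        norm_num
        linarith
      have e4 : ‖(w:ℂ) * Complex.I * ((Real.cos (Real.pi * k) : ℂ) * Complex.exp (w * Complex.I) - 1)‖ ≤ 2 * |w| := by
        rw [norm_mul, norm_mul, Complex.norm_I, Complex.norm_real, Real.norm_eq_abs]
        nlinarith
      linarith
    rw [mul_one_div, le_div_iff₀ (by positivity)]
    have h3 : ((k:ℝ)+1)^2 ≤ (Real.pi * k)^2 := by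
      apply pow_le_pow_left₀ (by positivity)
      nlinarith [Real.pi_gt_three]
    have := mul_le_mul_of_nonneg_left h3 (norm_nonneg (cosCoef k w))
    nlinarith

theorem hpcCoef_eq (k : ℕ) (w : ℝ) :
    hpcCoef k w = (if k = 0 then 1 else (Real.sqrt 2 : ℂ)) * cosCoef k w := by
  unfold hpcCoef cosCoef
  rw [← intervalIntegral.integral_const_mul]
  congr 1
  ext x
  unfold hpcFun
  split_ifs with h
  · simp [h]
  · push_cast; ring

theorem hpcCoef_norm_le (k : ℕ) (w : ℝ) :
    ‖hpcCoef k w‖ ≤ 8 * (1 + |w|)^2 * (1 / ((k:ℝ) + 1)^2) := by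
  rw [hpcCoef_eq, norm_mul]
  have h1 : Real.sqrt 2 ≤ 2 := by
    rw [Real.sqrt_le_left (by norm_num)]; norm_num
  have h2 : ‖(if k = 0 then 1 else (Real.sqrt 2 : ℂ))‖ ≤ 2 := by
    split_ifs
    · norm_num
    · rw [Complex.norm_real, Real.norm_of_nonneg (Real.sqrt_nonneg _)]
      exact h1
  have := mul_le_mul h2 (cosCoef_norm_le k w) (norm_nonneg _) (by norm_num)
  linarith

theorem summable_inv_sq : Summable fun k : ℕ => 1 / ((k:ℝ) + 1)^2 := by
  have := (summable_nat_add_iff 1).mpr (Real.summable_one_div_nat_pow.mpr (one_lt_two))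
  refine this.congr fun k => ?_
  push_cast; rfl

theorem cos_expansion (w : ℝ) (x : ℝ) (hx : x ∈ Icc (0:ℝ) 1) :
    HasSum (fun k : ℕ => hpcCoef k w * (hpcFun k x : ℂ)) (Complex.exp (w * x * Complex.I)) := by
  have : Fact ((0:ℝ) < 2) := ⟨by norm_num⟩
  let F : ℝ → ℂ := fun x => Complex.exp (w * (|x| : ℝ) * Complex.I)
  have hFc : Continuous F := by
    have := continuous_abs (G := ℝ)
    fun_prop
  have hG : Continuous (AddCircle.liftIco (2:ℝ) (-1) F) := by
    apply AddCircle.liftIco_continuous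
    · simp only [F]; norm_num
    · exact hFc.continuousOn
  let G : C(AddCircle (2:ℝ), ℂ) := ⟨_, hG⟩
  have hGv : ∀ x ∈ Ico (-1:ℝ) 1, G (x : AddCircle (2:ℝ)) = F x := by
    intro x hx
    have hx' : x ∈ Ico (-1:ℝ) (-1 + 2) := ⟨hx.1, by linarith [hx.2]⟩
    exact AddCircle.liftIco_coe_apply (f := F) hx'
  have hval : ∀ x ∈ Icc (0:ℝ) 1, G (x : AddCircle (2:ℝ)) = Complex.exp (w * x * Complex.I) := by
    intro x hx
    rcases hx.2.lt_or_eq with h | h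
    · have : G (x : AddCircle (2:ℝ)) = F x :=
        hGv _ (by constructor <;> linarith [hx.1, hx.2])
      rw [this]; simp only [F]; rw [abs_of_nonneg hx.1]
    · have h2 : (x : AddCircle (2:ℝ)) = ((-1 : ℝ) : AddCircle (2:ℝ)) := by
        rw [h, ← AddCircle.coe_add_period (2:ℝ) (-1)]; norm_num
      have : G ((-1 : ℝ) : AddCircle (2:ℝ)) = F (-1) :=
        hGv _ (by constructor <;> linarith [hx.1, hx.2])
      rw [h2, this, h]; simp [F]
  have hcoef : ∀ n : ℤ, fourierCoeff G n = cosCoef n.natAbs w := by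
    intro n
    have h1 : fourierCoeff G n = (1/2 : ℝ) • ∫ x in (-1:ℝ)..1, fourier (-n) (x : AddCircle (2:ℝ)) • F x := by
      rw [fourierCoeff_eq_intervalIntegral _ _ (-1)]
      norm_num only
      congr 1
      refine intervalIntegral.integral_congr_Ioo_of_le (by norm_num) fun x hx => ?_
      have : G (x : AddCircle (2:ℝ)) = F x :=
        hGv _ (by constructor <;> linarith [hx.1, hx.2])
      simp only [this]
    have hi : ∀ a b : ℝ, IntervalIntegrable (fun x : ℝ => Complex.exp (-(Real.pi * n * x * Complex.I)) * F x) volume a b :=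
      fun a b => Continuous.intervalIntegrable (by fun_prop) _ _
    have h2 : ∀ x : ℝ, fourier (-n) (x : AddCircle (2:ℝ)) • F x =
        Complex.exp (-(Real.pi * n * x * Complex.I)) * F x := by
      intro x
      rw [fourier_coe_apply, smul_eq_mul]
      congr 2
      push_cast; ring
    rw [h1]
    simp_rw [h2]
    rw [← intervalIntegral.integral_add_adjacent_intervals (hi (-1) 0) (hi 0 1)]
    have h3 : ∫ x in (-1:ℝ)..0, Complex.exp (-(Real.pi * n * x * Complex.I)) * F x =
        ∫ x in (0:ℝ)..1, Complex.exp (Real.pi * n * x * Complex.I) * F x := by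
      have := intervalIntegral.integral_comp_neg (a := (0:ℝ)) (b := 1)
        (fun x : ℝ => Complex.exp (-(Real.pi * n * x * Complex.I)) * F x)
      rw [neg_zero] at this
      rw [← this]
      congr 1; ext x
      simp only [F, abs_neg]
      congr 2
      push_cast; ring
    rw [h3, ← intervalIntegral.integral_add
      (Continuous.intervalIntegrable (by fun_prop) _ _) (hi 0 1)]
    unfold cosCoef
    rw [← intervalIntegral.integral_smul]
    refine intervalIntegral.integral_congr fun x hx => ?_
    rw [uIcc_of_le (by norm_num)] at hx
    simp only [F, abs_of_nonneg hx.1]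
    have hc : (Real.cos (Real.pi * (n.natAbs : ℝ) * x) : ℂ) = Complex.cos (Real.pi * n * x) := by
      have : Real.cos (Real.pi * (n.natAbs : ℝ) * x) = Real.cos (Real.pi * n * x) := by
        rw [Nat.cast_natAbs, Int.cast_abs]
        rcases abs_choice (n:ℝ) with h | h <;> rw [h]
        rw [← Real.cos_neg]; congr 1; ring
      rw [this]; push_cast; rfl
    rw [hc, Complex.cos]
    simp only [Complex.real_smul]
    push_cast
    rw [neg_mul]
    ring
  have hsumm : Summable (fourierCoeff G) := by
    have hs : Summable fun k : ℕ => cosCoef k w :=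
      Summable.of_norm_bounded (summable_inv_sq.mul_left _) (fun k => cosCoef_norm_le k w)
    apply Summable.of_nat_of_neg
    · simpa [hcoef] using hs
    · simpa [hcoef] using hs
  have hS := (has_pointwise_sum_fourier_series_of_summable hsumm (x : AddCircle (2:ℝ))).nat_add_neg
  rw [hval x hx] at hS
  have h0 := hasSum_ite_eq (0:ℕ) (fourierCoeff G 0 • fourier 0 (x : AddCircle (2:ℝ)))
  have := hS.sub h0
  rw [add_sub_cancel_right] at this
  refine this.congr_fun fun k => ?_
  have hs2 : (Real.sqrt 2 : ℂ) * Real.sqrt 2 = 2 := by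
    rw [← Complex.ofReal_mul, Real.mul_self_sqrt (by norm_num)]; norm_num
  rw [hpcCoef_eq, hpcFun]
  split_ifs with h
  · subst h
    simp [hcoef]
  · rw [hcoef, hcoef, fourier_coe_apply, fourier_coe_apply]
    simp only [Int.natAbs_neg, Int.natAbs_natCast, smul_eq_mul, sub_zero]
    push_cast
    have e1 : (2:ℂ) * Real.pi * Complex.I * k * x / 2 = Real.pi * k * x * Complex.I := by ring
    have e2 : (2:ℂ) * Real.pi * Complex.I * (-k) * x / 2 = -(Real.pi * k * x) * Complex.I := by ring
    rw [e1, e2, Complex.cos]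
    linear_combination (cosCoef k w * (Complex.exp (Real.pi * k * x * Complex.I) + Complex.exp (-(Real.pi * k * x) * Complex.I)) / 2) * hs2

theorem hpcCoef_continuous (k : ℕ) : Continuous (hpcCoef k) := by
  unfold hpcCoef
  apply intervalIntegral.continuous_parametric_intervalIntegral_of_continuous'
  have := hpcFun_continuous k
  unfold Function.uncurry
  fun_prop

theorem schwartz_repr (d : ℕ) (η : SchwartzMap (Fin d → ℝ) ℂ) :
    ∃ h : SchwartzMap (EuclideanSpace ℝ (Fin d)) ℂ, ∀ x : Fin d → ℝ,
      η x = ∫ ξ, h ξ * ∏ i, Complex.exp ((2 * Real.pi * ξ i : ℝ) * x i * Complex.I) := by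
  let L : EuclideanSpace ℝ (Fin d) ≃L[ℝ] (Fin d → ℝ) := EuclideanSpace.equiv (Fin d) ℝ
  let g : SchwartzMap (EuclideanSpace ℝ (Fin d)) ℂ := SchwartzMap.compCLMOfContinuousLinearEquiv ℂ L η
  refine ⟨FourierTransform.fourier g, fun x => ?_⟩
  have h1 : η x = g (L.symm x) := by simp [g]
  have h2 : FourierTransformInv.fourierInv (FourierTransform.fourier g) = g :=
    FourierTransform.fourierInv_fourier_eq g
  rw [h1]
  conv_lhs => rw [← h2]
  rw [SchwartzMap.fourierInv_coe, Real.fourierInv_eq']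
  congr 1; ext ξ
  rw [smul_eq_mul, mul_comm, ← Complex.exp_sum]
  congr 2
  simp [PiLp.inner_apply, L, Finset.mul_sum, Finset.sum_mul]
  refine Finset.sum_congr rfl fun i _ => ?_
  ring

/-- The dominating sequence. -/
noncomputable def hpcDecay (d : ℕ) (k : Fin d → ℕ) : ℝ := ∏ i, (1 / ((k i : ℝ) + 1)^2)

theorem hpcDecay_nonneg (d : ℕ) (k : Fin d → ℕ) : 0 ≤ hpcDecay d k :=
  Finset.prod_nonneg fun i _ => by positivity

theorem hpcDecay_summable (d : ℕ) : Summable (hpcDecay d) := by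
  have hs : Summable fun k : ℕ => ‖((1 / ((k:ℝ) + 1)^2 : ℝ) : ℂ)‖ := by
    refine summable_inv_sq.congr fun k => ?_
    rw [Complex.norm_real, Real.norm_of_nonneg (by positivity)]
  have := (hasSum_prod_pi_aux d (fun _ k => ((1 / ((k:ℝ) + 1)^2 : ℝ) : ℂ)) _ (fun _ => hs)
    (fun _ => hs.of_norm.hasSum)).1
  refine this.congr fun k => ?_
  rw [← Complex.ofReal_prod, Complex.norm_real]
  exact Real.norm_of_nonneg (hpcDecay_nonneg d k)

theorem hpc_continuous (d : ℕ) (k : Fin d → ℕ) : Continuous (hpc d k) := by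
  unfold hpc
  have := hpcFun_continuous
  fun_prop

theorem hpc_norm_le (d : ℕ) (k : Fin d → ℕ) (x : Fin d → ℝ) : ‖(hpc d k x : ℂ)‖ ≤ 2 ^ d := by
  rw [Complex.norm_real, hpc, norm_prod]
  calc _ ≤ ∏ _i : Fin d, (2:ℝ) :=
        Finset.prod_le_prod (fun _ _ => norm_nonneg _) (fun i _ => hpcFun_abs_le _ _)
    _ = 2 ^ d := by simp

theorem cube_measure (d : ℕ) : (volume : Measure (Fin d → ℝ)).restrict (Icc 0 1) =
    Measure.pi (fun _ : Fin d => (volume : Measure ℝ).restrict (Icc 0 1)) := by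
  rw [← Measure.restrict_pi_pi, ← volume_pi, Set.pi_univ_Icc]
  rfl

theorem integral_cube_prod (d : ℕ) (k : Fin d → ℕ) (w : Fin d → ℝ) :
    ∫ x in Icc (0 : Fin d → ℝ) 1, (hpc d k x : ℂ) * ∏ i, Complex.exp (w i * x i * Complex.I) =
      ∏ i, hpcCoef (k i) (w i) := by
  rw [cube_measure]
  have : ∀ x : Fin d → ℝ, (hpc d k x : ℂ) * ∏ i, Complex.exp (w i * x i * Complex.I) =
      ∏ i, (hpcFun (k i) (x i) : ℂ) * Complex.exp (w i * x i * Complex.I) := by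
    intro x
    rw [hpc, Complex.ofReal_prod, Finset.prod_mul_distrib]
  simp_rw [this]
  rw [integral_fintype_prod_eq_prod
    (f := fun i (t : ℝ) => (hpcFun (k i) t : ℂ) * Complex.exp (w i * t * Complex.I))]
  refine Finset.prod_congr rfl fun i _ => ?_
  rw [hpcCoef, intervalIntegral.integral_of_le zero_le_one, integral_Icc_eq_integral_Ioc]

section
variable {d : ℕ}

theorem majorant_integrable (h : SchwartzMap (EuclideanSpace ℝ (Fin d)) ℂ) :
    Integrable (fun ξ : EuclideanSpace ℝ (Fin d) =>
      ‖h ξ‖ * ∏ i, (8 * (1 + |2 * Real.pi * ξ i|)^2)) := by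
  have h1 := (h.integrable_pow_mul volume (2 * d)).add (h.integrable_pow_mul volume 0)
  have h2 := h1.const_mul ((8 * (2 * Real.pi + 1)^2)^d * 2^(2*d))
  refine h2.mono' ?_ (Filter.Eventually.of_forall fun ξ => ?_)
  · have := h.continuous
    exact Continuous.aestronglyMeasurable (by fun_prop)
  · have hp := Real.pi_pos
    have hn := norm_nonneg ξ
    rw [Real.norm_of_nonneg (mul_nonneg (norm_nonneg _) (Finset.prod_nonneg fun i _ => by positivity))]
    have e1 : ∏ i, (8 * (1 + |2 * Real.pi * ξ i|)^2) ≤ ∏ _i : Fin d, (8 * (2 * Real.pi + 1)^2 * (1 + ‖ξ‖)^2) := by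
      refine Finset.prod_le_prod (fun i _ => by positivity) fun i _ => ?_
      rw [mul_assoc 8, ← mul_pow]
      have hi : |ξ i| ≤ ‖ξ‖ := by
        simpa using PiLp.norm_apply_le ξ i
      have : |2 * Real.pi * ξ i| ≤ 2 * Real.pi * ‖ξ‖ := by
        rw [abs_mul, abs_of_pos (by positivity : 0 < 2 * Real.pi)]
        gcongr
      gcongr
      nlinarith
    have e2 : (1 + ‖ξ‖)^(2*d) ≤ 2^(2*d) * (‖ξ‖^(2*d) + 1) := by
      rcases le_total ‖ξ‖ 1 with hh | hh
      · calc (1 + ‖ξ‖)^(2*d) ≤ 2^(2*d) := by gcongr; linarith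
          _ ≤ _ := le_mul_of_one_le_right (by positivity) (by linarith [pow_nonneg hn (2*d)])
      · calc (1 + ‖ξ‖)^(2*d) ≤ (2 * ‖ξ‖)^(2*d) := by gcongr; linarith
          _ = 2^(2*d) * ‖ξ‖^(2*d) := mul_pow _ _ _
          _ ≤ _ := by gcongr; linarith
    have e3 : ∏ _i : Fin d, (8 * (2 * Real.pi + 1)^2 * (1 + ‖ξ‖)^2) =
        (8 * (2 * Real.pi + 1)^2)^d * (1 + ‖ξ‖)^(2*d) := by
      rw [Finset.prod_const, Finset.card_univ, Fintype.card_fin, mul_pow, pow_mul (1 + ‖ξ‖)]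
    rw [e3] at e1
    have e4 := e1.trans (mul_le_mul_of_nonneg_left e2 (by positivity))
    refine (mul_le_mul_of_nonneg_left e4 (norm_nonneg (h ξ))).trans (le_of_eq ?_)
    simp only [Pi.add_apply, pow_zero]
    ring

theorem coef_eq (h : SchwartzMap (EuclideanSpace ℝ (Fin d)) ℂ) (η : (Fin d → ℝ) → ℂ)
    (hη : ∀ x : Fin d → ℝ,
      η x = ∫ ξ, h ξ * ∏ i, Complex.exp ((2 * Real.pi * ξ i : ℝ) * x i * Complex.I))
    (k : Fin d → ℕ) :
    ∫ x in Icc (0 : Fin d → ℝ) 1, (hpc d k x : ℂ) * η x =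
      ∫ ξ, h ξ * ∏ i, hpcCoef (k i) (2 * Real.pi * ξ i) := by
  have hc := hpc_continuous d k
  have hh := h.continuous
  have hfin : IsFiniteMeasure ((volume : Measure (Fin d → ℝ)).restrict (Icc 0 1)) :=
    ⟨by simpa using isCompact_Icc.measure_lt_top⟩
  simp_rw [hη, ← integral_const_mul]
  rw [integral_integral_swap]
  · congr 1; ext ξ
    rw [← integral_cube_prod, ← integral_const_mul]
    congr 1; ext x
    ring
  · have hi : Integrable (fun z : (Fin d → ℝ) × (EuclideanSpace ℝ (Fin d)) => (2^d : ℂ) * h z.2)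
        (((volume : Measure (Fin d → ℝ)).restrict (Icc 0 1)).prod volume) :=
      Integrable.mul_prod (integrable_const _) h.integrable
    refine hi.mono ?_ (Filter.Eventually.of_forall fun z => ?_)
    · refine Continuous.aestronglyMeasurable ?_
      unfold Function.uncurry
      fun_prop
    · unfold Function.uncurry
      simp only [norm_mul, norm_prod, norm_exp_aux, Finset.prod_const_one, mul_one]
      have := hpc_norm_le d k z.1
      rw [norm_pow]
      norm_num only [Complex.norm_ofNat]
      gcongr

theorem coef_term_bound (h : SchwartzMap (EuclideanSpace ℝ (Fin d)) ℂ) (k : Fin d → ℕ)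
    (ξ : EuclideanSpace ℝ (Fin d)) :
    ‖h ξ * ∏ i, hpcCoef (k i) (2 * Real.pi * ξ i)‖ ≤
      (‖h ξ‖ * ∏ i, (8 * (1 + |2 * Real.pi * ξ i|)^2)) * hpcDecay d k := by
  rw [norm_mul, norm_prod, hpcDecay, mul_assoc, ← Finset.prod_mul_distrib]
  gcongr with i
  exact hpcCoef_norm_le _ _

theorem coef_integrable (h : SchwartzMap (EuclideanSpace ℝ (Fin d)) ℂ) (k : Fin d → ℕ) :
    Integrable (fun ξ : EuclideanSpace ℝ (Fin d) =>
      h ξ * ∏ i, hpcCoef (k i) (2 * Real.pi * ξ i)) := by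
  refine ((majorant_integrable h).mul_const (hpcDecay d k)).mono' ?_
    (Filter.Eventually.of_forall fun ξ => coef_term_bound h k ξ)
  have hh := h.continuous
  have := hpcCoef_continuous
  exact Continuous.aestronglyMeasurable (by fun_prop)

theorem coef_norm_int_le (h : SchwartzMap (EuclideanSpace ℝ (Fin d)) ℂ) (k : Fin d → ℕ) :
    ∫ ξ : EuclideanSpace ℝ (Fin d), ‖h ξ * ∏ i, hpcCoef (k i) (2 * Real.pi * ξ i)‖ ≤
      (∫ ξ : EuclideanSpace ℝ (Fin d), ‖h ξ‖ * ∏ i, (8 * (1 + |2 * Real.pi * ξ i|)^2))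
        * hpcDecay d k := by
  rw [← integral_mul_const]
  exact integral_mono (coef_integrable h k).norm ((majorant_integrable h).mul_const _)
    (coef_term_bound h k)

theorem expansion (h : SchwartzMap (EuclideanSpace ℝ (Fin d)) ℂ) (η : (Fin d → ℝ) → ℂ)
    (hη : ∀ x : Fin d → ℝ,
      η x = ∫ ξ, h ξ * ∏ i, Complex.exp ((2 * Real.pi * ξ i : ℝ) * x i * Complex.I))
    (x : Fin d → ℝ) (hx : x ∈ Icc (0 : Fin d → ℝ) 1) :
    HasSum (fun k : Fin d → ℕ => (∫ ξ : EuclideanSpace ℝ (Fin d),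
      h ξ * ∏ i, hpcCoef (k i) (2 * Real.pi * ξ i)) * (hpc d k x : ℂ)) (η x) := by
  have H := hasSum_integral_of_summable_integral_norm (μ := volume)
    (F := fun (k : Fin d → ℕ) (ξ : EuclideanSpace ℝ (Fin d)) =>
      (h ξ * ∏ i, hpcCoef (k i) (2 * Real.pi * ξ i)) * (hpc d k x : ℂ))
    (fun k => (coef_integrable h k).mul_const _) ?_
  · rw [hη]
    simp_rw [integral_mul_const] at H
    refine Eq.subst (motive := fun s => HasSum _ s) (Eq.symm ?_) H
    refine integral_congr_ae (Filter.Eventually.of_forall fun ξ => ?_)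
    simp only
    have hp := (hasSum_prod_pi_aux d
      (fun i k => hpcCoef k (2 * Real.pi * ξ i) * (hpcFun k (x i) : ℂ))
      (fun i => Complex.exp ((2 * Real.pi * ξ i : ℝ) * x i * Complex.I)) (fun i => ?_)
      (fun i => cos_expansion _ _ ⟨hx.1 i, hx.2 i⟩)).2
    · rw [← (hp.mul_left (h ξ)).tsum_eq]
      congr 1; ext k
      rw [hpc, Complex.ofReal_prod, mul_assoc, ← Finset.prod_mul_distrib]
    · refine Summable.of_nonneg_of_le (fun _ => norm_nonneg _) (fun k => ?_)
        ((summable_inv_sq.mul_left (8 * (1 + |2 * Real.pi * ξ i|)^2)).mul_right 2)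
      rw [norm_mul, Complex.norm_real]
      exact mul_le_mul (hpcCoef_norm_le _ _) (hpcFun_abs_le _ _) (norm_nonneg _) (by positivity)
  · refine Summable.of_nonneg_of_le (fun _ => integral_nonneg fun _ => norm_nonneg _) (fun k => ?_)
      (((hpcDecay_summable d).mul_left (∫ ξ : EuclideanSpace ℝ (Fin d),
        ‖h ξ‖ * ∏ i, (8 * (1 + |2 * Real.pi * ξ i|)^2))).mul_right (2^d))
    simp_rw [norm_mul _ (hpc d k x : ℂ)]
    rw [integral_mul_const]
    exact mul_le_mul (coef_norm_int_le h k) (hpc_norm_le d k x) (norm_nonneg _)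
      (mul_nonneg (integral_nonneg fun ξ => mul_nonneg (norm_nonneg _)
        (Finset.prod_nonneg fun i _ => by positivity)) (hpcDecay_nonneg d k))

end

theorem phi_sum (d : ℕ) (φ : Fin d → ℕ → ℝ → ℝ)
    (hnonneg : ∀ i j x, 0 ≤ φ i j x)
    (hsum : ∀ (i : Fin d) (k : ℕ), HasSum (fun j : ℕ => φ i j (k : ℝ)) 1) (k : Fin d → ℕ) :
    HasSum (fun j : Fin d → ℕ => ∏ i, φ i (j i) ((k i : ℕ) : ℝ)) 1 := by
  have := (hasSum_prod_pi_aux d (fun i j => ((φ i j (k i : ℝ) : ℝ) : ℂ)) (fun _ => 1) (fun i => ?_)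
    (fun i => ?_)).2
  · rw [Finset.prod_const_one] at this
    rw [← Complex.hasSum_ofReal]
    simpa using this
  · refine (hsum i (k i)).summable.congr fun j => ?_
    rw [Complex.norm_real, Real.norm_of_nonneg (hnonneg _ _ _)]
  · have := Complex.hasSum_ofReal.mpr (hsum i (k i))
    rwa [Complex.ofReal_one] at this

/-- Given nonnegative families `(φ^{(i)}_j)_j` on `ℝ` with `Σ_j φ^{(i)}_j(k) = 1` for all
`k ∈ ℕ₀`, for every `f ∈ L¹([0,1]^d)` and Schwartz `η` the double series
`Σ_j̄ Σ_k̄ φ_j̄(k̄) ⟨f, c_k̄⟩⟨c_k̄, η⟩` converges absolutely to `∫ f η`; that is,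
`f = Σ_j̄ f^{hpc}_j̄` weak*-ly in `𝒮′(ℝ^d)`. -/
theorem statement7 (d : ℕ) (φ : Fin d → ℕ → ℝ → ℝ)
    (hnonneg : ∀ i j x, 0 ≤ φ i j x)
    (hsum : ∀ (i : Fin d) (k : ℕ), HasSum (fun j : ℕ => φ i j (k : ℝ)) 1)
    (f : (Fin d → ℝ) → ℂ) (hf : IntegrableOn f (Icc 0 1))
    (η : SchwartzMap (Fin d → ℝ) ℂ) :
    Summable (fun jk : (Fin d → ℕ) × (Fin d → ℕ) =>
      ‖((∏ i, φ i (jk.1 i) ((jk.2 i : ℕ) : ℝ) : ℝ) : ℂ) *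
        ((∫ x in Icc (0 : Fin d → ℝ) 1, f x * (hpc d jk.2 x : ℂ)) *
          (∫ x in Icc (0 : Fin d → ℝ) 1, (hpc d jk.2 x : ℂ) * η x))‖) ∧
    ∑' jk : (Fin d → ℕ) × (Fin d → ℕ),
        ((∏ i, φ i (jk.1 i) ((jk.2 i : ℕ) : ℝ) : ℝ) : ℂ) *
          ((∫ x in Icc (0 : Fin d → ℝ) 1, f x * (hpc d jk.2 x : ℂ)) *
            (∫ x in Icc (0 : Fin d → ℝ) 1, (hpc d jk.2 x : ℂ) * η x)) =
      ∫ x in Icc (0 : Fin d → ℝ) 1, f x * η x := by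
  obtain ⟨h, hη⟩ := schwartz_repr d η
  set A : (Fin d → ℕ) → ℂ := fun k => ∫ x in Icc (0 : Fin d → ℝ) 1, f x * (hpc d k x : ℂ) with hA
  set B : (Fin d → ℕ) → ℂ := fun k => ∫ x in Icc (0 : Fin d → ℝ) 1, (hpc d k x : ℂ) * η x with hB
  set C : ℝ := ∫ ξ : EuclideanSpace ℝ (Fin d), ‖h ξ‖ * ∏ i, (8 * (1 + |2 * Real.pi * ξ i|)^2) with hC
  have hBe : ∀ k, B k = ∫ ξ : EuclideanSpace ℝ (Fin d),
      h ξ * ∏ i, hpcCoef (k i) (2 * Real.pi * ξ i) := fun k => coef_eq h η hη k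
  have hBb : ∀ k, ‖B k‖ ≤ C * hpcDecay d k := fun k => by
    rw [hBe]
    exact (norm_integral_le_integral_norm _).trans (coef_norm_int_le h k)
  have hfi : ∀ k, Integrable (fun x => f x * (hpc d k x : ℂ))
      ((volume : Measure (Fin d → ℝ)).restrict (Icc 0 1)) := fun k =>
    Integrable.mul_bdd (c := 2^d) hf
      (Complex.continuous_ofReal.comp (hpc_continuous d k)).aestronglyMeasurable
      (Filter.Eventually.of_forall fun x => hpc_norm_le d k x)
  set D : ℝ := ∫ x in Icc (0 : Fin d → ℝ) 1, ‖f x‖ with hD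
  have hAn : ∀ k, ∫ x in Icc (0 : Fin d → ℝ) 1, ‖f x * (hpc d k x : ℂ)‖ ≤ D * 2^d := fun k => by
    rw [hD, ← integral_mul_const]
    refine integral_mono (hfi k).norm (hf.norm.mul_const _) fun x => ?_
    simp only [norm_mul (f x)]
    exact mul_le_mul_of_nonneg_left (hpc_norm_le d k x) (norm_nonneg _)
  have hD0 : 0 ≤ D := integral_nonneg fun _ => norm_nonneg _
  have hAb : ∀ k, ‖A k‖ ≤ D * 2^d := fun k =>
    (norm_integral_le_integral_norm _).trans (hAn k)
  have hsumm : Summable fun k => (D * 2^d) * (C * hpcDecay d k) :=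
    ((hpcDecay_summable d).mul_left C).mul_left _
  have hAB : Summable fun k => ‖A k * B k‖ := by
    refine Summable.of_nonneg_of_le (fun _ => norm_nonneg _) (fun k => ?_) hsumm
    rw [norm_mul]
    exact mul_le_mul (hAb k) (hBb k) (norm_nonneg _) (by positivity)
  have hmain : HasSum (fun k => A k * B k) (∫ x in Icc (0 : Fin d → ℝ) 1, f x * η x) := by
    have H := hasSum_integral_of_summable_integral_norm
      (μ := (volume : Measure (Fin d → ℝ)).restrict (Icc 0 1))
      (F := fun (k : Fin d → ℕ) (x : Fin d → ℝ) => (f x * (hpc d k x : ℂ)) * B k)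
      (fun k => (hfi k).mul_const _) ?_
    · simp_rw [integral_mul_const] at H
      refine Eq.subst (motive := fun s => HasSum _ s) (Eq.symm ?_) H
      refine setIntegral_congr_fun (measurableSet_Icc (a := (0 : Fin d → ℝ)) (b := 1)) fun x hx => ?_
      have := expansion h η hη x hx
      simp_rw [← hBe] at this
      rw [← (this.mul_left (f x)).tsum_eq]
      congr 1; ext k
      ring
    · refine Summable.of_nonneg_of_le (fun _ => integral_nonneg fun _ => norm_nonneg _)
        (fun k => ?_) hsumm
      simp_rw [norm_mul _ (B k)]
      rw [integral_mul_const]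
      exact mul_le_mul (hAn k) (hBb k) (norm_nonneg _) (by positivity)
  have hφ := phi_sum d φ hnonneg hsum
  have hφ0 : ∀ (j k : Fin d → ℕ), 0 ≤ ∏ i, φ i (j i) ((k i : ℕ) : ℝ) :=
    fun j k => Finset.prod_nonneg fun i _ => hnonneg _ _ _
  have hS : Summable (fun kj : (Fin d → ℕ) × (Fin d → ℕ) =>
      ‖((∏ i, φ i (kj.2 i) ((kj.1 i : ℕ) : ℝ) : ℝ) : ℂ) * (A kj.1 * B kj.1)‖) := by
    have hn : ∀ j k : Fin d → ℕ, ‖((∏ i, φ i (j i) ((k i : ℕ) : ℝ) : ℝ) : ℂ) * (A k * B k)‖ =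
        (∏ i, φ i (j i) ((k i : ℕ) : ℝ)) * ‖A k * B k‖ := fun j k => by
      rw [norm_mul, Complex.norm_real, Real.norm_of_nonneg (hφ0 j k)]
    rw [summable_prod_of_nonneg (fun _ => norm_nonneg _)]
    simp only [hn]
    refine ⟨fun k => ((hφ k).mul_right _).summable, ?_⟩
    refine hAB.congr fun k => ?_
    rw [((hφ k).mul_right _).tsum_eq, one_mul]
  refine ⟨(Equiv.prodComm _ _).summable_iff.mp hS, ?_⟩
  rw [← (Equiv.prodComm (Fin d → ℕ) (Fin d → ℕ)).tsum_eq]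
  change ∑' kj : (Fin d → ℕ) × (Fin d → ℕ),
      ((∏ i, φ i (kj.2 i) ((kj.1 i : ℕ) : ℝ) : ℝ) : ℂ) * (A kj.1 * B kj.1) = _
  rw [hS.of_norm.tsum_prod, ← hmain.tsum_eq]
  congr 1; ext k
  have := ((Complex.hasSum_ofReal.mpr (hφ k)).mul_right (A k * B k)).tsum_eq
  rw [Complex.ofReal_one, one_mul] at this
  exact this
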